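/- arXiv:2105.12272 — 2 statements merged into one kernel-verified Lean document; each statement's English description precedes it below -/
import Mathlib

section
/- Performance difference lemma: For any two policies π1 and π2 in a finite MDP, PerfDiff(π2, π1) ≤ (1/(1−γ)) · Err_{d^{π1}}(π1, π2, R) + (γ R_max/(1−γ)²) · Err_{d^{π1}}(π1, π2, P). -/
open Finset

noncomputable section

variable {S A Z : Type*}

/-- State distribution at time `t` when following policy `π` from initial distribution `μ`. -/
def stateDist [Fintype S] [Fintype A] (P : S → A → S → ℝ) (π : S → A → ℝ)
    (μ : S → ℝ) : ℕ → S → ℝ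
  | 0 => μ
  | t + 1 => fun s' => ∑ s : S, ∑ a : A, π s a * P s a s' * stateDist P π μ t s

/-- Discounted visitation distribution `d^π`. -/
def visitation [Fintype S] [Fintype A] (P : S → A → S → ℝ) (π : S → A → ℝ)
    (μ : S → ℝ) (γ : ℝ) (s : S) : ℝ :=
  (1 - γ) * ∑' t : ℕ, γ ^ t * stateDist P π μ t s

/-- Performance `J(π)`. -/
def perf [Fintype S] [Fintype A] (P : S → A → S → ℝ) (R : S → A → ℝ)
    (π : S → A → ℝ) (μ : S → ℝ) (γ : ℝ) : ℝ :=
  ∑' t : ℕ, γ ^ t * ∑ s : S, ∑ a : A, R s a * π s a * stateDist P π μ t s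

/-- `PerfDiff(π, π')`. -/
def perfDiff [Fintype S] [Fintype A] (P : S → A → S → ℝ) (R : S → A → ℝ)
    (μ : S → ℝ) (γ : ℝ) (π π' : S → A → ℝ) : ℝ :=
  |perf P R π μ γ - perf P R π' μ γ|

/-- Total variation distance. -/
def dTV {X : Type*} [Fintype X] (p q : X → ℝ) : ℝ :=
  (1 / 2) * ∑ x : X, |p x - q x|

/-- KL divergence. -/
def dKL {X : Type*} [Fintype X] (p q : X → ℝ) : ℝ :=
  ∑ x : X, p x * Real.log (p x / q x)

/-- Pearson chi-squared divergence (terms with `q x = 0` vanish by the `x / 0 = 0` convention). -/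
def dChi2 {X : Type*} [Fintype X] (p q : X → ℝ) : ℝ :=
  ∑ x : X, (p x - q x) ^ 2 / q x

/-- `Err_ρ(π1, π2, F)` for a reward-like function `F`. -/
def errF [Fintype S] [Fintype A] (ρ : S → ℝ) (π1 π2 : S → A → ℝ) (F : S → A → ℝ) : ℝ :=
  |∑ s : S, ρ s * ∑ a : A, (π1 s a - π2 s a) * F s a|

/-- `Err_ρ(π1, π2, G)` for a transition-like function `G`. -/
def errG [Fintype S] [Fintype A] (ρ : S → ℝ) (π1 π2 : S → A → ℝ) (G : S → A → S → ℝ) : ℝ :=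
  ∑ s' : S, |∑ s : S, ρ s * ∑ a : A, (π1 s a - π2 s a) * G s a s'|

/-- Marginalization `ρ_Z` of a state distribution onto `Z` via `φ`. -/
def margDist [Fintype S] [DecidableEq Z] (φ : S → Z) (ρ : S → ℝ) (z : Z) : ℝ :=
  ∑ s : S, if φ s = z then ρ s else 0

/-- Marginalization `π_Z` of a policy onto `Z` via `φ`, w.r.t. the state distribution `ρ`
(by the `x / 0 = 0` convention it takes a fixed arbitrary value when `ρ_Z(z) = 0`). -/
def margPolicy [Fintype S] [DecidableEq Z] (φ : S → Z) (ρ : S → ℝ) (π : S → A → ℝ)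
    (z : Z) (a : A) : ℝ :=
  (∑ s : S, if φ s = z then ρ s * π s a else 0) / margDist φ ρ z

/-- Log-linear (softmax) policy `π_θ(a|z)`. -/
def softmaxPol {d : ℕ} [Fintype A] (θ : A → Fin d → ℝ) (z : Fin d → ℝ) (a : A) : ℝ :=
  Real.exp (∑ i, θ a i * z i) / ∑ b : A, Real.exp (∑ i, θ b i * z i)

/-- Sum of absolute values of all partial derivatives of `L : ℝ^{d×|A|} → ℝ` at `θ`. -/
def gradL1 {d : ℕ} [Fintype A] [DecidableEq A] (L : (A → Fin d → ℝ) → ℝ)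
    (θ : A → Fin d → ℝ) : ℝ :=
  ∑ a : A, ∑ i : Fin d, |fderiv ℝ L θ (Pi.single a (Pi.single i 1))|

/-!
Write `d` for the visitation distribution of `π₁`, `V` for the value function of `π₂`, and `Kᵢ`,
`rᵢ` for the transition matrix and expected reward of `πᵢ`. The flow equation
`d (1 - γ K₁) = (1 - γ) μ` turns `J(π₂) = μ V` into `(1 - γ) J(π₂) = d (1 - γ K₁) V`. With the
Bellman equation `(1 - γ K₂) V = r₂` and `(1 - γ) J(π₁) = d r₁` this gives the exact identity
`(1 - γ) (J(π₁) - J(π₂)) = d (r₁ - r₂) + γ d (K₁ - K₂) V`.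
Pairing the `ℓ¹` norm of `d (K₁ - K₂)` with `‖V‖_∞ ≤ R_max / (1 - γ)` accounts for the second
factor `1 / (1 - γ)` in the transition term.
-/

open Matrix
open scoped Matrix.Norms.Operator

section Norms

variable {m n : Type*} [Fintype m] [Fintype n]

theorem sum_abs_le_one_of_sum_eq_one {p : n → ℝ} (hp0 : ∀ i, 0 ≤ p i) (hp1 : ∑ i, p i = 1) :
    ∑ i, |p i| ≤ 1 := by
  simp only [abs_of_nonneg (hp0 _), hp1, le_refl]

theorem abs_dotProduct_le (v w : n → ℝ) : |v ⬝ᵥ w| ≤ (∑ i, |v i|) * ‖w‖ :=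
  calc |v ⬝ᵥ w| ≤ ∑ i, |v i * w i| := abs_sum_le_sum_abs _ _
    _ = ∑ i, |v i| * ‖w i‖ := by simp only [abs_mul, Real.norm_eq_abs]
    _ ≤ ∑ i, |v i| * ‖w‖ := by gcongr with i; exact norm_le_pi_norm w i
    _ = (∑ i, |v i|) * ‖w‖ := (sum_mul ..).symm

theorem sum_abs_vecMul_le (v : m → ℝ) (M : Matrix m n ℝ) :
    ∑ j, |(v ᵥ* M) j| ≤ ∑ i, |v i| * ∑ j, |M i j| :=
  calc ∑ j, |(v ᵥ* M) j| ≤ ∑ j, ∑ i, |v i * M i j| := by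
        gcongr with j; exact abs_sum_le_sum_abs _ _
    _ = ∑ i, |v i| * ∑ j, |M i j| := by
        rw [sum_comm]; simp only [abs_mul, mul_sum]

theorem linfty_opNorm_le {α : Type*} [SeminormedAddCommGroup α] {M : Matrix m n α} {C : ℝ}
    (hC : 0 ≤ C) (hM : ∀ i, ∑ j, ‖M i j‖ ≤ C) : ‖M‖ ≤ C := by
  lift C to NNReal using hC
  rw [linfty_opNorm_def, NNReal.coe_le_coe, Finset.sup_le_iff]
  intro i _
  rw [← NNReal.coe_le_coe]
  simpa using hM i

end Norms

section DecisionProcess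

variable [Fintype S] [Fintype A]

/-- The state transition matrix `P_π` induced by the policy `π`, rows indexed by the source state;
distributions are row vectors, so that one step of the chain is `ρ ↦ ρ ᵥ* P_π`. -/
def transitionMatrix (P : S → A → S → ℝ) (π : S → A → ℝ) : Matrix S S ℝ :=
  .of fun s => π s ᵥ* .of (P s)

/-- The expected one-step reward of the policy `π` in each state. -/
def policyReward (R : S → A → ℝ) (π : S → A → ℝ) (s : S) : ℝ :=
  π s ⬝ᵥ R s

/-- The Neumann series `∑ γ^t K^t`, which sums up the discounted future of a chain with transition
matrix `K`; it is `(1 - γ K)⁻¹` when `‖γ K‖ < 1`, and a junk value when the series diverges. -/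
def discountedResolvent [DecidableEq S] (γ : ℝ) (K : Matrix S S ℝ) : Matrix S S ℝ :=
  ∑' t : ℕ, (γ • K) ^ t

/-- The value function `V^π`: the performance of the policy `π` as a function of the initial
state. -/
def valueFunction [DecidableEq S] (P : S → A → S → ℝ) (R : S → A → ℝ) (π : S → A → ℝ)
    (γ : ℝ) : S → ℝ :=
  discountedResolvent γ (transitionMatrix P π) *ᵥ policyReward R π

theorem errF_eq_abs_dotProduct (ρ : S → ℝ) (π1 π2 : S → A → ℝ) (R : S → A → ℝ) :
    errF ρ π1 π2 R = |ρ ⬝ᵥ (policyReward R π1 - policyReward R π2)| := by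
  simp only [errF, dotProduct, policyReward, Pi.sub_apply, sub_mul, sum_sub_distrib]

theorem errG_eq_sum_abs_vecMul (ρ : S → ℝ) (π1 π2 : S → A → ℝ) (P : S → A → S → ℝ) :
    errG ρ π1 π2 P = ∑ s', |(ρ ᵥ* (transitionMatrix P π1 - transitionMatrix P π2)) s'| := by
  simp only [errG, vecMul, dotProduct, transitionMatrix, of_apply, Matrix.sub_apply, sub_mul,
    sum_sub_distrib]

section Bounds

variable {P : S → A → S → ℝ} {R : S → A → ℝ} {π : S → A → ℝ} {γ Rmax : ℝ}

theorem norm_transitionMatrix_le_one (hP : ∀ s a, ∑ s', |P s a s'| ≤ 1)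
    (hπ : ∀ s, ∑ a, |π s a| ≤ 1) : ‖transitionMatrix P π‖ ≤ 1 := by
  refine linfty_opNorm_le zero_le_one fun s => ?_
  calc ∑ s', |transitionMatrix P π s s'| ≤ ∑ a, |π s a| * ∑ s', |P s a s'| :=
        sum_abs_vecMul_le (π s) (.of (P s))
    _ ≤ ∑ a, |π s a| := sum_le_sum fun a _ => mul_le_of_le_one_right (abs_nonneg _) (hP s a)
    _ ≤ 1 := hπ s

theorem norm_smul_transitionMatrix_le (hγ : 0 ≤ γ) (hP : ∀ s a, ∑ s', |P s a s'| ≤ 1)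
    (hπ : ∀ s, ∑ a, |π s a| ≤ 1) : ‖γ • transitionMatrix P π‖ ≤ γ := by
  rw [norm_smul, Real.norm_of_nonneg hγ]
  exact mul_le_of_le_one_right hγ (norm_transitionMatrix_le_one hP hπ)

theorem norm_policyReward_le (hRmax : 0 ≤ Rmax) (hR : ∀ s a, |R s a| ≤ Rmax)
    (hπ : ∀ s, ∑ a, |π s a| ≤ 1) : ‖policyReward R π‖ ≤ Rmax := by
  refine (pi_norm_le_iff_of_nonneg hRmax).2 fun s => ?_
  have hRs : ‖R s‖ ≤ Rmax := (pi_norm_le_iff_of_nonneg hRmax).2 (hR s)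
  calc |π s ⬝ᵥ R s| ≤ (∑ a, |π s a|) * ‖R s‖ := abs_dotProduct_le _ _
    _ ≤ 1 * Rmax := by gcongr; exact hπ s
    _ = Rmax := one_mul _

end Bounds

section Series

variable [DecidableEq S]

section Resolvent

variable {γ : ℝ} {K : Matrix S S ℝ}

theorem hasSum_discountedResolvent (hK : ‖γ • K‖ < 1) :
    HasSum (fun t : ℕ => (γ • K) ^ t) (discountedResolvent γ K) :=
  (summable_geometric_of_norm_lt_one hK).hasSum

theorem discountedResolvent_mul_one_sub_smul (hK : ‖γ • K‖ < 1) :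
    discountedResolvent γ K * (1 - γ • K) = 1 :=
  geom_series_mul_neg _ hK

theorem one_sub_smul_mul_discountedResolvent (hK : ‖γ • K‖ < 1) :
    (1 - γ • K) * discountedResolvent γ K = 1 :=
  mul_neg_geom_series _ hK

theorem hasSum_pow_mul_vecMul_pow_dotProduct (hK : ‖γ • K‖ < 1) (u v : S → ℝ) :
    HasSum (fun t : ℕ => γ ^ t * ((u ᵥ* K ^ t) ⬝ᵥ v)) (u ᵥ* discountedResolvent γ K ⬝ᵥ v) := by
  let pairing : Matrix S S ℝ →+ ℝ :=
    { toFun := fun M => u ᵥ* M ⬝ᵥ v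
      map_zero' := by simp only [vecMul_zero, zero_dotProduct]
      map_add' := fun M N => by simp only [vecMul_add, add_dotProduct] }
  have hpairing : Continuous pairing :=
    (continuous_const.matrix_vecMul continuous_id).dotProduct continuous_const
  have hterm (t : ℕ) : pairing ((γ • K) ^ t) = γ ^ t * (u ᵥ* K ^ t ⬝ᵥ v) := by
    simp [pairing, smul_pow, vecMul_smul]
  have hsum : HasSum (fun t : ℕ => pairing ((γ • K) ^ t)) (pairing (discountedResolvent γ K)) :=
    (hasSum_discountedResolvent hK).map pairing hpairing
  simp only [hterm] at hsum
  exact hsum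

end Resolvent

theorem stateDist_eq_vecMul_pow (P : S → A → S → ℝ) (π : S → A → ℝ) (μ : S → ℝ) (t : ℕ) :
    stateDist P π μ t = μ ᵥ* transitionMatrix P π ^ t := by
  induction t with
  | zero => simp only [stateDist, pow_zero, vecMul_one]
  | succ t ih =>
    rw [pow_succ, ← vecMul_vecMul, ← ih]
    ext s'
    simp only [stateDist, ← sum_mul]
    exact sum_congr rfl fun s _ => mul_comm _ _

variable {P : S → A → S → ℝ} {π : S → A → ℝ} {γ : ℝ}

theorem visitation_eq_smul_vecMul (hK : ‖γ • transitionMatrix P π‖ < 1) (μ : S → ℝ) :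
    visitation P π μ γ = (1 - γ) • (μ ᵥ* discountedResolvent γ (transitionMatrix P π)) := by
  ext s
  have hsum := (hasSum_pow_mul_vecMul_pow_dotProduct hK μ (Pi.single s 1)).tsum_eq
  simp only [dotProduct_single_one] at hsum
  simp only [visitation, stateDist_eq_vecMul_pow, hsum, Pi.smul_apply, smul_eq_mul]

theorem perf_eq_dotProduct_valueFunction (hK : ‖γ • transitionMatrix P π‖ < 1)
    (R : S → A → ℝ) (μ : S → ℝ) : perf P R π μ γ = μ ⬝ᵥ valueFunction P R π γ := by
  have hreward (ρ : S → ℝ) : ∑ s, ∑ a, R s a * π s a * ρ s = ρ ⬝ᵥ policyReward R π := by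
    simp only [dotProduct, policyReward, mul_sum, mul_comm]
  simp only [perf, hreward, stateDist_eq_vecMul_pow, valueFunction, dotProduct_mulVec]
  exact (hasSum_pow_mul_vecMul_pow_dotProduct hK μ (policyReward R π)).tsum_eq

theorem one_sub_mul_perf (hK : ‖γ • transitionMatrix P π‖ < 1) (R : S → A → ℝ) (μ : S → ℝ) :
    (1 - γ) * perf P R π μ γ = visitation P π μ γ ⬝ᵥ policyReward R π := by
  rw [perf_eq_dotProduct_valueFunction hK, visitation_eq_smul_vecMul hK, smul_dotProduct,
    valueFunction, dotProduct_mulVec, smul_eq_mul]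

theorem visitation_vecMul_one_sub_smul (hK : ‖γ • transitionMatrix P π‖ < 1) (μ : S → ℝ) :
    visitation P π μ γ ᵥ* (1 - γ • transitionMatrix P π) = (1 - γ) • μ := by
  rw [visitation_eq_smul_vecMul hK, smul_vecMul, vecMul_vecMul,
    discountedResolvent_mul_one_sub_smul hK, vecMul_one]

theorem one_sub_smul_mulVec_valueFunction (hK : ‖γ • transitionMatrix P π‖ < 1)
    (R : S → A → ℝ) :
    (1 - γ • transitionMatrix P π) *ᵥ valueFunction P R π γ = policyReward R π := by
  rw [valueFunction, mulVec_mulVec, one_sub_smul_mul_discountedResolvent hK, one_mulVec]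

theorem norm_valueFunction_le {Rmax : ℝ} {R : S → A → ℝ} (hγ : γ < 1)
    (hK : ‖γ • transitionMatrix P π‖ ≤ γ) (hR : ‖policyReward R π‖ ≤ Rmax) :
    ‖valueFunction P R π γ‖ ≤ Rmax / (1 - γ) := by
  set V := valueFunction P R π γ
  have hbellman : V = policyReward R π + (γ • transitionMatrix P π) *ᵥ V := by
    rw [← one_sub_smul_mulVec_valueFunction (hK.trans_lt hγ) R, sub_mulVec, one_mulVec,
      sub_add_cancel]
  have hV : ‖V‖ ≤ Rmax + γ * ‖V‖ :=
    calc ‖V‖ = ‖policyReward R π + (γ • transitionMatrix P π) *ᵥ V‖ := congrArg _ hbellman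
      _ ≤ ‖policyReward R π‖ + ‖(γ • transitionMatrix P π) *ᵥ V‖ := norm_add_le _ _
      _ ≤ ‖policyReward R π‖ + ‖γ • transitionMatrix P π‖ * ‖V‖ := by
          gcongr; exact linfty_opNorm_mulVec _ _
      _ ≤ Rmax + γ * ‖V‖ := by gcongr
  rw [le_div_iff₀ (sub_pos.2 hγ)]
  linarith

theorem one_sub_mul_perf_sub_perf {π1 π2 : S → A → ℝ} (hK1 : ‖γ • transitionMatrix P π1‖ < 1)
    (hK2 : ‖γ • transitionMatrix P π2‖ < 1) (R : S → A → ℝ) (μ : S → ℝ) :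
    (1 - γ) * (perf P R π1 μ γ - perf P R π2 μ γ)
      = visitation P π1 μ γ ⬝ᵥ (policyReward R π1 - policyReward R π2)
        + γ * (visitation P π1 μ γ ᵥ* (transitionMatrix P π1 - transitionMatrix P π2)
          ⬝ᵥ valueFunction P R π2 γ) := by
  set d := visitation P π1 μ γ
  set V := valueFunction P R π2 γ
  have hperf1 : (1 - γ) * perf P R π1 μ γ = d ⬝ᵥ policyReward R π1 := one_sub_mul_perf hK1 R μ
  have hperf2 : (1 - γ) * perf P R π2 μ γ = d ⬝ᵥ (1 - γ • transitionMatrix P π1) *ᵥ V := by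
    rw [perf_eq_dotProduct_valueFunction hK2, dotProduct_mulVec,
      visitation_vecMul_one_sub_smul hK1, smul_dotProduct, smul_eq_mul]
  have hbellman : (1 - γ • transitionMatrix P π2) *ᵥ V = policyReward R π2 :=
    one_sub_smul_mulVec_valueFunction hK2 R
  rw [mul_sub, hperf1, hperf2, ← hbellman]
  simp only [sub_mulVec, one_mulVec, smul_mulVec, vecMul_sub, sub_dotProduct, dotProduct_sub,
    dotProduct_smul, smul_eq_mul, dotProduct_mulVec]
  ring

theorem one_sub_mul_perfDiff_le {π1 π2 : S → A → ℝ} (hγ0 : 0 ≤ γ) (hγ1 : γ < 1)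
    (hK1 : ‖γ • transitionMatrix P π1‖ < 1) (hK2 : ‖γ • transitionMatrix P π2‖ < 1)
    (R : S → A → ℝ) (μ : S → ℝ) :
    (1 - γ) * perfDiff P R μ γ π2 π1
      ≤ errF (visitation P π1 μ γ) π1 π2 R
        + γ * (errG (visitation P π1 μ γ) π1 π2 P * ‖valueFunction P R π2 γ‖) := by
  set d := visitation P π1 μ γ
  set V := valueFunction P R π2 γ
  rw [errF_eq_abs_dotProduct, errG_eq_sum_abs_vecMul]
  set Δr := policyReward R π1 - policyReward R π2
  set ΔK := transitionMatrix P π1 - transitionMatrix P π2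
  calc (1 - γ) * perfDiff P R μ γ π2 π1
      = |(1 - γ) * (perf P R π1 μ γ - perf P R π2 μ γ)| := by
        rw [abs_mul, abs_of_pos (sub_pos.2 hγ1), perfDiff, abs_sub_comm]
    _ = |d ⬝ᵥ Δr + γ * (d ᵥ* ΔK ⬝ᵥ V)| := by rw [one_sub_mul_perf_sub_perf hK1 hK2]
    _ ≤ |d ⬝ᵥ Δr| + |γ * (d ᵥ* ΔK ⬝ᵥ V)| := abs_add_le _ _
    _ = |d ⬝ᵥ Δr| + γ * |d ᵥ* ΔK ⬝ᵥ V| := by rw [abs_mul, abs_of_nonneg hγ0]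
    _ ≤ |d ⬝ᵥ Δr| + γ * ((∑ s', |(d ᵥ* ΔK) s'|) * ‖V‖) := by
        gcongr; exact abs_dotProduct_le _ _

end Series

theorem performance_difference_lemma_general
    (P : S → A → S → ℝ) (hP : ∀ s a, ∑ s', |P s a s'| ≤ 1)
    (R : S → A → ℝ) (Rmax : ℝ) (hRmax : 0 ≤ Rmax) (hR : ∀ s a, |R s a| ≤ Rmax)
    (μ : S → ℝ) (γ : ℝ) (hγ0 : 0 ≤ γ) (hγ1 : γ < 1) (π1 π2 : S → A → ℝ)
    (hπ1 : ∀ s, ∑ a, |π1 s a| ≤ 1) (hπ2 : ∀ s, ∑ a, |π2 s a| ≤ 1) :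
    perfDiff P R μ γ π2 π1 ≤
      (1 / (1 - γ)) * errF (visitation P π1 μ γ) π1 π2 R
        + (γ * Rmax / (1 - γ) ^ 2) * errG (visitation P π1 μ γ) π1 π2 P := by
  classical
  have hγ : 0 < 1 - γ := sub_pos.2 hγ1
  have hK1 := norm_smul_transitionMatrix_le hγ0 hP hπ1
  have hK2 := norm_smul_transitionMatrix_le hγ0 hP hπ2
  have hV := norm_valueFunction_le hγ1 hK2 (norm_policyReward_le hRmax hR hπ2)
  have herrG : 0 ≤ errG (visitation P π1 μ γ) π1 π2 P := sum_nonneg fun _ _ => abs_nonneg _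
  calc perfDiff P R μ γ π2 π1
      ≤ (errF (visitation P π1 μ γ) π1 π2 R
          + γ * (errG (visitation P π1 μ γ) π1 π2 P * ‖valueFunction P R π2 γ‖)) / (1 - γ) :=
        (le_div_iff₀' hγ).2
          (one_sub_mul_perfDiff_le hγ0 hγ1 (hK1.trans_lt hγ1) (hK2.trans_lt hγ1) R μ)
    _ ≤ (errF (visitation P π1 μ γ) π1 π2 R
          + γ * (errG (visitation P π1 μ γ) π1 π2 P * (Rmax / (1 - γ)))) / (1 - γ) := by gcongr
    _ = _ := by field_simp

end DecisionProcess

theorem performance_difference_lemma [Fintype S] [Fintype A] [Nonempty S] [Nonempty A]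
    (P : S → A → S → ℝ) (hP0 : ∀ s a s', 0 ≤ P s a s')
    (hP1 : ∀ s a, ∑ s' : S, P s a s' = 1)
    (R : S → A → ℝ) (Rmax : ℝ) (hRmax : 0 ≤ Rmax) (hR : ∀ s a, |R s a| ≤ Rmax)
    (μ : S → ℝ) (hμ0 : ∀ s, 0 ≤ μ s) (hμ1 : ∑ s : S, μ s = 1)
    (γ : ℝ) (hγ0 : 0 ≤ γ) (hγ1 : γ < 1)
    (π1 π2 : S → A → ℝ)
    (hπ10 : ∀ s a, 0 ≤ π1 s a) (hπ11 : ∀ s, ∑ a : A, π1 s a = 1)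
    (hπ20 : ∀ s a, 0 ≤ π2 s a) (hπ21 : ∀ s, ∑ a : A, π2 s a = 1) :
    perfDiff P R μ γ π2 π1 ≤
      (1 / (1 - γ)) * errF (visitation P π1 μ γ) π1 π2 R
        + (γ * Rmax / (1 - γ) ^ 2) * errG (visitation P π1 μ γ) π1 π2 P :=
  performance_difference_lemma_general P
    (fun s a => sum_abs_le_one_of_sum_eq_one (hP0 s a) (hP1 s a)) R Rmax hRmax hR μ γ hγ0 hγ1 π1 π2
    (fun s => sum_abs_le_one_of_sum_eq_one (hπ10 s) (hπ11 s))
    fun s => sum_abs_le_one_of_sum_eq_one (hπ20 s) (hπ21 s)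
end
end

section
/- Representation bottleneck lemma: Let π1 and π2 be policies in a finite MDP, Z a finite set, φ : S → Z, R_Z : Z×A → [−R_max, R_max], and P_Z a function where P_Z(·|z,a) is a probability distribution on S for every (z,a). Define R̄(s,a) = R_Z(φ(s),a) and P̄(s'|s,a) = P_Z(s'|φ(s),a). Then Err_{d^{π1}}(π1, π2, R̄) ≤ 2 R_max · ∑_{z∈Z} d^{π1}_Z(z) · D_TV(π_{1,Z}(·|z) ‖ π_{2,Z}(·|z)) and Err_{d^{π1}}(π1, π2, P̄) ≤ 2 · ∑_{z∈Z} d^{π1}_Z(z) · D_TV(π_{1,Z}(·|z) ‖ π_{2,Z}(·|z)), where d^{π1}_Z and π_{k,Z} (k=1,2) are the marginalizations onto Z with respect to d^{π1}. -/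
open Finset

noncomputable section

variable {S A Z : Type*}

/-!
For functions that factor through `φ`, averaging over `s ∼ ρ` and `a ∼ π(·|s)` is the same as
averaging over `z ∼ ρ_Z` and `a ∼ π_Z(·|z)`. Both errors are therefore norms of
`∑ z, ρ_Z(z) • ∑ a, (π_{1,Z}(a|z) - π_{2,Z}(a|z)) • F z a`, with `F` taking values in `ℝ` for
rewards and in `ℓ¹(S)` for transitions, and the triangle inequality produces the total variation
distances.
-/

theorem stateDist_nonneg [Fintype S] [Fintype A] {P : S → A → S → ℝ} {π : S → A → ℝ} {μ : S → ℝ}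
    (hP : ∀ s a s', 0 ≤ P s a s') (hπ : ∀ s a, 0 ≤ π s a) (hμ : ∀ s, 0 ≤ μ s) (t : ℕ) (s : S) :
    0 ≤ stateDist P π μ t s := by
  induction t generalizing s with
  | zero => exact hμ s
  | succ t ih =>
    exact sum_nonneg fun s' _ => sum_nonneg fun a _ =>
      mul_nonneg (mul_nonneg (hπ s' a) (hP s' a s)) (ih s')

theorem visitation_nonneg [Fintype S] [Fintype A] {P : S → A → S → ℝ} {π : S → A → ℝ} {μ : S → ℝ}
    {γ : ℝ} (hP : ∀ s a s', 0 ≤ P s a s') (hπ : ∀ s a, 0 ≤ π s a) (hμ : ∀ s, 0 ≤ μ s)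
    (hγ0 : 0 ≤ γ) (hγ1 : γ ≤ 1) (s : S) : 0 ≤ visitation P π μ γ s :=
  mul_nonneg (sub_nonneg.2 hγ1) <| tsum_nonneg fun t =>
    mul_nonneg (pow_nonneg hγ0 t) (stateDist_nonneg hP hπ hμ t s)

theorem norm_sum_sub_smul_le_dTV {X E : Type*} [Fintype X] [SeminormedAddCommGroup E]
    [NormedSpace ℝ E] (p q : X → ℝ) {f : X → E} {C : ℝ} (hf : ∀ x, ‖f x‖ ≤ C) :
    ‖∑ x, (p x - q x) • f x‖ ≤ 2 * C * dTV p q :=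
  calc ‖∑ x, (p x - q x) • f x‖
    _ ≤ ∑ x, |p x - q x| * C := norm_sum_le_of_le _ fun x _ => by
        rw [norm_smul, Real.norm_eq_abs]
        gcongr
        exact hf x
    _ = 2 * C * dTV p q := by rw [dTV, ← sum_mul]; ring

theorem errG_eq_norm_toLp [Fintype S] [Fintype A] (ρ : S → ℝ) (π₁ π₂ : S → A → ℝ)
    (G : S → A → S → ℝ) :
    errG ρ π₁ π₂ G = ‖∑ s, ρ s • ∑ a, (π₁ s a - π₂ s a) • WithLp.toLp 1 (G s a)‖ := by
  simp [errG, PiLp.norm_eq_of_L1]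

section Marginalization

variable [Fintype S] [DecidableEq Z] (φ : S → Z) {ρ : S → ℝ}

theorem margDist_nonneg (hρ : ∀ s, 0 ≤ ρ s) (z : Z) : 0 ≤ margDist φ ρ z :=
  sum_nonneg fun s _ => ite_nonneg (hρ s) le_rfl

theorem eq_zero_of_margDist_eq_zero (hρ : ∀ s, 0 ≤ ρ s) {s : S} (h : margDist φ ρ (φ s) = 0) :
    ρ s = 0 := by
  rw [margDist, ← sum_filter, sum_eq_zero_iff_of_nonneg fun s _ => hρ s] at h
  exact h s (by simp)

theorem margDist_mul_margPolicy (hρ : ∀ s, 0 ≤ ρ s) (π : S → A → ℝ) (z : Z) (a : A) :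
    margDist φ ρ z * margPolicy φ ρ π z a = ∑ s with φ s = z, ρ s * π s a := by
  rw [margPolicy, ← sum_filter]
  refine mul_div_cancel_of_imp' fun h => sum_eq_zero fun s hs => ?_
  obtain rfl : φ s = z := (mem_filter.1 hs).2
  rw [eq_zero_of_margDist_eq_zero φ hρ h, zero_mul]

variable [Fintype A] [Fintype Z]

theorem sum_smul_comp_eq_sum_margDist_smul {E : Type*} [AddCommMonoid E] [Module ℝ E]
    (hρ : ∀ s, 0 ≤ ρ s) (π : S → A → ℝ) (F : Z → A → E) :
    ∑ s, ρ s • ∑ a, π s a • F (φ s) a =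
      ∑ z, margDist φ ρ z • ∑ a, margPolicy φ ρ π z a • F z a := by
  rw [← sum_fiberwise univ φ]
  refine sum_congr rfl fun z _ => ?_
  calc ∑ s with φ s = z, ρ s • ∑ a, π s a • F (φ s) a
    _ = ∑ s with φ s = z, ∑ a, (ρ s * π s a) • F z a := sum_congr rfl fun s hs => by
        simp only [(mem_filter.1 hs).2, smul_sum, mul_smul]
    _ = ∑ a, (∑ s with φ s = z, ρ s * π s a) • F z a := by
        rw [sum_comm]
        simp only [sum_smul]
    _ = margDist φ ρ z • ∑ a, margPolicy φ ρ π z a • F z a := by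
        simp only [← margDist_mul_margPolicy φ hρ, smul_sum, mul_smul]

theorem norm_sum_smul_sub_smul_comp_le {E : Type*} [SeminormedAddCommGroup E] [NormedSpace ℝ E]
    (hρ : ∀ s, 0 ≤ ρ s) (π₁ π₂ : S → A → ℝ) {F : Z → A → E} {C : ℝ} (hF : ∀ z a, ‖F z a‖ ≤ C) :
    ‖∑ s, ρ s • ∑ a, (π₁ s a - π₂ s a) • F (φ s) a‖ ≤
      2 * C * ∑ z, margDist φ ρ z * dTV (margPolicy φ ρ π₁ z) (margPolicy φ ρ π₂ z) := by
  have marginalize : ∑ s, ρ s • ∑ a, (π₁ s a - π₂ s a) • F (φ s) a =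
      ∑ z, margDist φ ρ z •
        ∑ a, (margPolicy φ ρ π₁ z a - margPolicy φ ρ π₂ z a) • F z a := by
    simp only [sub_smul, sum_sub_distrib, smul_sub, sum_smul_comp_eq_sum_margDist_smul φ hρ]
  rw [marginalize, mul_sum]
  refine norm_sum_le_of_le _ fun z _ => ?_
  rw [norm_smul, Real.norm_of_nonneg (margDist_nonneg φ hρ z), mul_left_comm]
  exact mul_le_mul_of_nonneg_left (norm_sum_sub_smul_le_dTV _ _ (hF z)) (margDist_nonneg φ hρ z)

theorem representation_bottleneck_lemma_general (hρ : ∀ s, 0 ≤ ρ s) (π₁ π₂ : S → A → ℝ)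
    {RZ : Z → A → ℝ} {Rmax : ℝ} (hRZ : ∀ z a, |RZ z a| ≤ Rmax)
    {PZ : Z → A → S → ℝ} {C : ℝ} (hPZ : ∀ z a, ∑ s', |PZ z a s'| ≤ C) :
    errF ρ π₁ π₂ (fun s a => RZ (φ s) a) ≤
        2 * Rmax * ∑ z, margDist φ ρ z * dTV (margPolicy φ ρ π₁ z) (margPolicy φ ρ π₂ z) ∧
      errG ρ π₁ π₂ (fun s a s' => PZ (φ s) a s') ≤
        2 * C * ∑ z, margDist φ ρ z * dTV (margPolicy φ ρ π₁ z) (margPolicy φ ρ π₂ z) := by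
  constructor
  · exact norm_sum_smul_sub_smul_comp_le φ hρ π₁ π₂ (F := RZ) hRZ
  · rw [errG_eq_norm_toLp]
    refine norm_sum_smul_sub_smul_comp_le φ hρ π₁ π₂ (F := fun z a => WithLp.toLp 1 (PZ z a))
      fun z a => ?_
    simpa only [PiLp.norm_eq_of_L1, Real.norm_eq_abs] using hPZ z a

end Marginalization

theorem representation_bottleneck_lemma
    [Fintype S] [Fintype A] [Fintype Z] [Nonempty S] [Nonempty A] [DecidableEq Z]
    (P : S → A → S → ℝ) (hP0 : ∀ s a s', 0 ≤ P s a s')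
    (hP1 : ∀ s a, ∑ s' : S, P s a s' = 1)
    (R : S → A → ℝ) (Rmax : ℝ) (hRmax : 0 ≤ Rmax) (hR : ∀ s a, |R s a| ≤ Rmax)
    (μ : S → ℝ) (hμ0 : ∀ s, 0 ≤ μ s) (hμ1 : ∑ s : S, μ s = 1)
    (γ : ℝ) (hγ0 : 0 ≤ γ) (hγ1 : γ < 1)
    (π1 π2 : S → A → ℝ)
    (hπ10 : ∀ s a, 0 ≤ π1 s a) (hπ11 : ∀ s, ∑ a : A, π1 s a = 1)
    (hπ20 : ∀ s a, 0 ≤ π2 s a) (hπ21 : ∀ s, ∑ a : A, π2 s a = 1)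
    (φ : S → Z)
    (RZ : Z → A → ℝ) (hRZ : ∀ z a, |RZ z a| ≤ Rmax)
    (PZ : Z → A → S → ℝ) (hPZ0 : ∀ z a s', 0 ≤ PZ z a s')
    (hPZ1 : ∀ z a, ∑ s' : S, PZ z a s' = 1) :
    errF (visitation P π1 μ γ) π1 π2 (fun s a => RZ (φ s) a) ≤
        2 * Rmax * ∑ z : Z, margDist φ (visitation P π1 μ γ) z *
          dTV (margPolicy φ (visitation P π1 μ γ) π1 z)
            (margPolicy φ (visitation P π1 μ γ) π2 z) ∧
      errG (visitation P π1 μ γ) π1 π2 (fun s a s' => PZ (φ s) a s') ≤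
        2 * ∑ z : Z, margDist φ (visitation P π1 μ γ) z *
          dTV (margPolicy φ (visitation P π1 μ γ) π1 z)
            (margPolicy φ (visitation P π1 μ γ) π2 z) := by
  have hPZ : ∀ z a, ∑ s', |PZ z a s'| ≤ 1 := fun z a => by simp [abs_of_nonneg, hPZ0, hPZ1]
  simpa only [mul_one] using representation_bottleneck_lemma_general φ
    (visitation_nonneg hP0 hπ10 hμ0 hγ0 hγ1.le) π1 π2 hRZ hPZ
end
end
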